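/- arXiv:2108.06642 — 3 statements merged into one kernel-verified Lean document; each statement's English description precedes it below -/
import Mathlib

section
/- Let X and W be subcategories of A such that X is closed under extensions, W is a cogenerator for X, and W is X-injective (W ⊆ X^⊥). If C ∈ X̂, then there exist a short exact sequence 0 → Y_C → X_C →^{φ_C} C → 0 with X_C ∈ X and Y_C ∈ Ŵ, and a short exact sequence 0 → C →^{ψ^C} Y^C → X^C → 0 with X^C ∈ X and Y^C ∈ Ŵ, such that φ_C is an X-precover of C (every morphism X' → C with X' ∈ X factors through φ_C) and ψ^C is a Ŵ-preenvelope of C (every morphism C → Y' with Y' ∈ Ŵ factors through ψ^C). -/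
/-!
A short exact sequence is a cocartesian square with a zero corner and a monic top edge, so the
pasting law for pushouts turns hulls `0 → M → Y → E → 0` and approximations `0 → Y → E → M → 0`,
with `E ∈ X` and `Y ∈ Ŵ`, into one another.

* If `0 → K → E → M → 0` is exact with `E ∈ X` and `0 → K → Y → E' → 0` is a hull of `K`, the
  pushout `P` of `E ← K → Y` lies in `X`, being an extension of `E'` by `E`, and
  `0 → Y → P → M → 0` is an approximation of `M`.
* If `0 → Y → E → M → 0` is an approximation and `0 → E → V → E' → 0` is exact with `V ∈ W` and
  `E' ∈ X`, the pushout `Q` of `V ← E → M` gives a hull `0 → M → Q → E' → 0`, where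
  `0 → Y → V → Q → 0` shows that a `W`-resolution of `Y` extends to one of `Q`.

An object of `X` has a hull because `W` is a cogenerator; from there, alternating the two
constructions along an `X`-resolution of `M` produces both sequences. Dimension shifting gives
`Ŵ ⊆ X^⊥`, so the obstructions in `Ext¹` to the required factorizations vanish.
-/

open CategoryTheory CategoryTheory.Limits CategoryTheory.Abelian ZeroObject

universe w v u

namespace FrobeniusPaper

variable {C : Type u} [Category.{v} C] [Abelian C]

/-- `f, g` form a short exact sequence `0 → A → B → D → 0` in the abelian category `C`. -/
def IsSES {A B D : C} (f : A ⟶ B) (g : B ⟶ D) : Prop :=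
  ∃ w : f ≫ g = 0, (ShortComplex.mk f g w).ShortExact

/-- A "subcategory" in the sense of the paper: a full additive subcategory, regarded as the
predicate of membership for its objects, closed under isomorphisms and direct summands. -/
structure IsSubcat (X : C → Prop) : Prop where
  zero : X 0
  iso_closed : ∀ {A B : C}, (A ≅ B) → X A → X B
  biprod_closed : ∀ {A B : C}, X A → X B → X (A ⊞ B)
  summand_closed : ∀ {A M : C} (i : A ⟶ M) (p : M ⟶ A), i ≫ p = 𝟙 A → X M → X A

/-- `Hat X n M` means `M ∈ X̂ₙ`, i.e. there is an exact sequence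
`0 → Xₙ → ⋯ → X₁ → X₀ → M → 0` with all `Xᵢ ∈ X`. -/
def Hat (X : C → Prop) : ℕ → C → Prop
  | 0, M => X M
  | (n + 1), M => ∃ (K E : C) (f : K ⟶ E) (g : E ⟶ M), IsSES f g ∧ X E ∧ Hat X n K

/-- `M ∈ X̂ = ⋃ₙ X̂ₙ`. -/
def HatAll (X : C → Prop) (M : C) : Prop := ∃ n, Hat X n M

/-- `W` is a cogenerator for `X`. -/
def IsCogenerator (W X : C → Prop) : Prop :=
  (∀ M, W M → X M) ∧
    ∀ M, X M → ∃ (W₀ X' : C) (f : M ⟶ W₀) (g : W₀ ⟶ X'), IsSES f g ∧ W W₀ ∧ X X'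

/-- `W` is a generator for `X`. -/
def IsGenerator (W X : C → Prop) : Prop :=
  (∀ M, W M → X M) ∧
    ∀ M, X M → ∃ (X' W₀ : C) (f : X' ⟶ W₀) (g : W₀ ⟶ M), IsSES f g ∧ W W₀ ∧ X X'

/-- `X` is closed under extensions. -/
def ExtClosed (X : C → Prop) : Prop :=
  ∀ ⦃A B D : C⦄ (f : A ⟶ B) (g : B ⟶ D), IsSES f g → X A → X D → X B

/-- `X` is closed under kernels of epimorphisms. -/
def KerEpiClosed (X : C → Prop) : Prop :=
  ∀ ⦃A B D : C⦄ (f : A ⟶ B) (g : B ⟶ D), IsSES f g → X B → X D → X A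

/-- A thick subcategory: closed under direct summands and two-out-of-three for
short exact sequences. -/
def IsThickSub (T : C → Prop) : Prop :=
  IsSubcat T ∧ ∀ ⦃A B D : C⦄ (f : A ⟶ B) (g : B ⟶ D), IsSES f g →
    (T A → T B → T D) ∧ (T A → T D → T B) ∧ (T B → T D → T A)

/-- Membership in `Thick(X)`, the smallest thick subcategory containing `X`. -/
def thickClosure (X : C → Prop) (M : C) : Prop :=
  ∀ T : C → Prop, IsThickSub T → (∀ N, X N → T N) → T M

variable [HasExt.{w} C]

/-- `Y ∈ X^⊥`, i.e. `Extⁱ(M, Y) = 0` for all `i ≥ 1` and `M ∈ X`. -/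
def rightPerp (X : C → Prop) (Y : C) : Prop :=
  ∀ M, X M → ∀ i : ℕ, 1 ≤ i → Subsingleton (Abelian.Ext M Y i)

/-- A left Frobenius pair `(X, W)`. -/
structure LeftFrobenius (X W : C → Prop) : Prop where
  subX : IsSubcat X
  subW : IsSubcat W
  extClosed : ExtClosed X
  kerEpiClosed : KerEpiClosed X
  cogen : IsCogenerator W X
  perp : ∀ M, W M → rightPerp X M

/-- A strong left Frobenius pair `(X, W)`. -/
structure StrongLeftFrobenius (X W : C → Prop) extends LeftFrobenius X W : Prop where
  gen : IsGenerator W X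
  proj : ∀ M N, W M → X N → ∀ i : ℕ, 1 ≤ i → Subsingleton (Abelian.Ext M N i)

/-- A cotorsion pair `(U, V)` on an extension-closed subcategory `B` of `C`. -/
structure CotorsionPairOn (B U V : C → Prop) : Prop where
  subU : ∀ M, U M → B M
  subV : ∀ M, V M → B M
  isoU : ∀ {A B' : C}, (A ≅ B') → U A → U B'
  summandU : ∀ {A M : C} (i : A ⟶ M) (p : M ⟶ A), i ≫ p = 𝟙 A → U M → U A
  isoV : ∀ {A B' : C}, (A ≅ B') → V A → V B'
  summandV : ∀ {A M : C} (i : A ⟶ M) (p : M ⟶ A), i ≫ p = 𝟙 A → V M → V A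
  ext1 : ∀ M N, U M → V N → Subsingleton (Abelian.Ext M N 1)
  res : ∀ M, B M → ∃ (V₀ U₀ : C) (f : V₀ ⟶ U₀) (g : U₀ ⟶ M), IsSES f g ∧ U U₀ ∧ V V₀
  cores : ∀ M, B M → ∃ (V₀ U₀ : C) (f : M ⟶ V₀) (g : V₀ ⟶ U₀), IsSES f g ∧ U U₀ ∧ V V₀

section Pushouts

variable {𝒜 : Type u} [Category.{v} 𝒜] [Abelian 𝒜]

theorem isSES_iff_mono_and_isPushout {A B D : 𝒜} {f : A ⟶ B} {g : B ⟶ D} :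
    IsSES f g ↔ Mono f ∧ IsPushout f (0 : A ⟶ 0) g (0 : 0 ⟶ D) := by
  constructor
  · rintro ⟨w, hS⟩
    have : Epi g := hS.epi_g
    have comp_inl (s : PushoutCocone f (0 : A ⟶ 0)) : f ≫ s.inl = 0 := by simp [s.condition]
    exact ⟨hS.mono_f, ⟨⟨by simp [w]⟩, ⟨PushoutCocone.IsColimit.mk _
      (fun s => hS.exact.desc s.inl (comp_inl s)) (fun s => hS.exact.g_desc _ _)
      (fun s => (isZero_zero 𝒜).eq_of_src _ _)
      (fun s m hm _ => (cancel_epi g).1 (hm.trans (hS.exact.g_desc _ _).symm))⟩⟩⟩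
  · rintro ⟨hf, sq⟩
    have w : f ≫ g = 0 := by simpa using sq.w
    have hg : Epi g := MorphismProperty.of_isPushout (P := .epimorphisms 𝒜) sq
      (inferInstanceAs (Epi (0 : A ⟶ 0)))
    have hcoker : IsColimit (CokernelCofork.ofπ g w) := CokernelCofork.IsColimit.ofπ _ _
      (fun z hz => sq.desc z 0 (by simp [hz])) (fun z hz => sq.inl_desc _ _ _)
      (fun z hz m hm => by rw [← cancel_epi g, hm, sq.inl_desc])
    exact ⟨w, .mk' (ShortComplex.exact_of_g_is_cokernel _ hcoker) hf hg⟩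

theorem IsSES.exists_isSES_of_isPushout {K E M Y P : 𝒜} {f : K ⟶ E} {g : E ⟶ M}
    {a : K ⟶ Y} {i : E ⟶ P} {j : Y ⟶ P} (h : IsSES f g) (sq : IsPushout f a i j) :
    ∃ q : P ⟶ M, IsSES j q := by
  obtain ⟨hf, hfg⟩ := isSES_iff_mono_and_isPushout.1 h
  have hj : Mono j := MorphismProperty.of_isPushout (P := .monomorphisms 𝒜) sq.flip hf
  have w : f ≫ g = a ≫ 0 := by simpa using hfg.w
  refine ⟨sq.desc g 0 w, isSES_iff_mono_and_isPushout.2 ⟨hj, .of_top ?_ (by simp) sq⟩⟩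
  simpa using hfg

theorem IsSES.comp_of_isPushout {K E M V P : 𝒜} {f : K ⟶ E} {g : E ⟶ M} {t : E ⟶ V} {i : V ⟶ P}
    {j : M ⟶ P} (h : IsSES f g) [Mono t] (sq : IsPushout t g i j) : IsSES (f ≫ t) i := by
  obtain ⟨_, hfg⟩ := isSES_iff_mono_and_isPushout.1 h
  exact isSES_iff_mono_and_isPushout.2 ⟨inferInstance, by simpa using hfg.paste_horiz sq⟩

theorem isSES_zero_id (M : 𝒜) : IsSES (0 : 0 ⟶ M) (𝟙 M) :=
  isSES_iff_mono_and_isPushout.2 ⟨inferInstance, .of_vert_isIso ⟨by simp⟩⟩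

theorem isSES_id_zero (M : 𝒜) : IsSES (𝟙 M) (0 : M ⟶ 0) :=
  isSES_iff_mono_and_isPushout.2 ⟨inferInstance, .of_horiz_isIso ⟨by simp⟩⟩

end Pushouts

section Approximations

variable {𝒜 : Type u} [Category.{v} 𝒜] [Abelian 𝒜]

/-- `M` is an epimorphic image of an object of `X` with kernel in `Y`. For `Y = Ŵ` this is an
`X`-approximation of `M` in the sense of Auslander and Buchweitz; `Hat X (n + 1)` is by definition
`HasApproximation X (Hat X n)`. -/
def HasApproximation (X Y : 𝒜 → Prop) (M : 𝒜) : Prop :=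
  ∃ (K E : 𝒜) (f : K ⟶ E) (g : E ⟶ M), IsSES f g ∧ X E ∧ Y K

/-- `M` embeds in an object of `Y` with cokernel in `X`. For `Y = Ŵ` this is a `Ŵ`-hull of `M` in
the sense of Auslander and Buchweitz. -/
def HasHull (X Y : 𝒜 → Prop) (M : 𝒜) : Prop :=
  ∃ (H E : 𝒜) (f : M ⟶ H) (g : H ⟶ E), IsSES f g ∧ X E ∧ Y H

variable {X Y W : 𝒜 → Prop} {M : 𝒜}

theorem HasApproximation.hasHull (hcog : IsCogenerator W X) (h : HasApproximation X Y M) :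
    HasHull X (HasApproximation W Y) M := by
  obtain ⟨K, E, k, g, hkg, hE, hK⟩ := h
  obtain ⟨V, E', t, p, htp, hV, hE'⟩ := hcog.2 E hE
  have : Mono t := (isSES_iff_mono_and_isPushout.1 htp).1
  have sq := IsPushout.of_hasPushout t g
  obtain ⟨q, hq⟩ := htp.exists_isSES_of_isPushout sq
  exact ⟨_, E', _, q, hq, hE', K, V, _, _, hkg.comp_of_isPushout sq, hV, hK⟩

theorem HasHull.hasApproximation_of_isSES (hXext : ExtClosed X) {K E : 𝒜} {f : K ⟶ E} {g : E ⟶ M}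
    (hfg : IsSES f g) (hE : X E) (h : HasHull X Y K) : HasApproximation X Y M := by
  obtain ⟨H, E', a, b, hab, hE', hH⟩ := h
  have sq := IsPushout.of_hasPushout f a
  obtain ⟨q, hq⟩ := hfg.exists_isSES_of_isPushout sq
  obtain ⟨r, hr⟩ := hab.exists_isSES_of_isPushout sq.flip
  exact ⟨H, _, _, q, hq, hXext _ r hr hE hE', hH⟩

theorem Hat.hasHull (hXext : ExtClosed X) (hcog : IsCogenerator W X) :
    ∀ {n : ℕ} {M : 𝒜}, Hat X n M → HasHull X (Hat W n) M
  | 0, M, hM =>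
    let ⟨V, E, f, g, hfg, hV, hE⟩ := hcog.2 M hM
    ⟨V, E, f, g, hfg, hE, hV⟩
  | _ + 1, _, ⟨_, _, _, _, hfg, hE, hK⟩ =>
    ((Hat.hasHull hXext hcog hK).hasApproximation_of_isSES hXext hfg hE).hasHull hcog

theorem HatAll.hasHull (hXext : ExtClosed X) (hcog : IsCogenerator W X) (hM : HatAll X M) :
    HasHull X (HatAll W) M := by
  obtain ⟨n, hn⟩ := hM
  obtain ⟨H, E, f, g, hfg, hE, hH⟩ := hn.hasHull hXext hcog
  exact ⟨H, E, f, g, hfg, hE, n, hH⟩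

theorem hatAll_zero {V : 𝒜} (hV : W V) : HatAll W 0 :=
  ⟨1, V, V, 𝟙 V, 0, isSES_id_zero V, hV, hV⟩

theorem HatAll.hasApproximation (hXext : ExtClosed X) (hcog : IsCogenerator W X) (hM : HatAll X M) :
    HasApproximation X (HatAll W) M := by
  obtain ⟨_ | n, hn⟩ := hM
  · obtain ⟨V, _, _, _, _, hV, _⟩ := hcog.2 M hn
    exact ⟨0, M, 0, 𝟙 M, isSES_zero_id M, hn, hatAll_zero hV⟩
  · obtain ⟨K, E, f, g, hfg, hE, hK⟩ := hn
    exact (HatAll.hasHull hXext hcog ⟨n, hK⟩).hasApproximation_of_isSES hXext hfg hE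

end Approximations

section Ext

variable {A B D : C} {f : A ⟶ B} {g : B ⟶ D}

theorem IsSES.exists_lift (h : IsSES f g) {T : C} [hT : Subsingleton (Ext T A 1)] (u : T ⟶ D) :
    ∃ v : T ⟶ B, v ≫ g = u := by
  obtain ⟨w, hS⟩ := h
  obtain ⟨x, hx⟩ := Ext.covariant_sequence_exact₃ T hS (Ext.mk₀ u) (zero_add 1) (hT.elim _ _)
  obtain ⟨v, rfl⟩ := (Ext.mk₀_bijective _ _).2 x
  exact ⟨v, (Ext.mk₀_bijective _ _).1 (by rwa [Ext.mk₀_comp_mk₀] at hx)⟩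

theorem IsSES.exists_extension (h : IsSES f g) {T : C} [hT : Subsingleton (Ext D T 1)]
    (u : A ⟶ T) : ∃ v : B ⟶ T, f ≫ v = u := by
  obtain ⟨w, hS⟩ := h
  obtain ⟨x, hx⟩ := Ext.contravariant_sequence_exact₁ hS T (Ext.mk₀ u) (add_zero 1) (hT.elim _ _)
  obtain ⟨v, rfl⟩ := (Ext.mk₀_bijective _ _).2 x
  exact ⟨v, (Ext.mk₀_bijective _ _).1 (by rwa [Ext.mk₀_comp_mk₀] at hx)⟩

theorem IsSES.subsingleton_ext_right (h : IsSES f g) {T : C} {i : ℕ}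
    [hB : Subsingleton (Ext T B i)] [hA : Subsingleton (Ext T A (i + 1))] :
    Subsingleton (Ext T D i) := by
  obtain ⟨w, hS⟩ := h
  refine subsingleton_of_forall_eq 0 fun x => ?_
  obtain ⟨y, rfl⟩ := Ext.covariant_sequence_exact₃ T hS x rfl (hA.elim _ _)
  rw [hB.elim y 0, Ext.zero_comp]

variable {X W : C → Prop}

theorem rightPerp_of_hat (hinj : ∀ M, W M → rightPerp X M) :
    ∀ {n : ℕ} {Y : C}, Hat W n Y → rightPerp X Y
  | 0, Y, hY => hinj Y hY
  | _ + 1, _, ⟨_, E, _, _, hfg, hE, hK⟩ => fun T hT i hi =>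
    have := hinj E hE T hT i hi
    have := rightPerp_of_hat hinj hK T hT (i + 1) (by lia)
    hfg.subsingleton_ext_right

theorem HatAll.subsingleton_ext_one (hinj : ∀ M, W M → rightPerp X M) {T Y : C}
    (hY : HatAll W Y) (hT : X T) : Subsingleton (Ext T Y 1) :=
  let ⟨_, hn⟩ := hY
  rightPerp_of_hat hinj hn T hT 1 le_rfl

theorem statement2_general (hXext : ExtClosed X) (hcog : IsCogenerator W X)
    (hinj : ∀ M, W M → rightPerp X M) {M : C} (hM : HatAll X M) :
    (∃ (Y E : C) (f : Y ⟶ E) (φ : E ⟶ M), IsSES f φ ∧ X E ∧ HatAll W Y ∧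
      ∀ (X' : C) (u : X' ⟶ M), X X' → ∃ v : X' ⟶ E, v ≫ φ = u) ∧
    (∃ (Y E : C) (ψ : M ⟶ Y) (g : Y ⟶ E), IsSES ψ g ∧ X E ∧ HatAll W Y ∧
      ∀ (Y' : C) (u : M ⟶ Y'), HatAll W Y' → ∃ v : Y ⟶ Y', ψ ≫ v = u) := by
  obtain ⟨Y, E, f, φ, hφ, hE, hY⟩ := hM.hasApproximation hXext hcog
  obtain ⟨Y₁, E₁, ψ, g, hψ, hE₁, hY₁⟩ := hM.hasHull hXext hcog
  refine ⟨⟨Y, E, f, φ, hφ, hE, hY, fun X' u hX' => ?_⟩,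
    ⟨Y₁, E₁, ψ, g, hψ, hE₁, hY₁, fun Y' u hY' => ?_⟩⟩
  · have := hY.subsingleton_ext_one hinj hX'
    exact hφ.exists_lift u
  · have := hY'.subsingleton_ext_one hinj hE₁
    exact hψ.exists_extension u

end Ext

/-- Approximations: if `X` is closed under extensions, `W` is an `X`-injective
cogenerator for `X`, and `C ∈ X̂`, then `C` admits an `X`-precover with kernel in `Ŵ` and a
`Ŵ`-preenvelope with cokernel in `X`. -/
theorem statement2 {C : Type u} [Category.{v} C] [Abelian C]
    [EnoughProjectives C] [EnoughInjectives C] [HasExt.{w} C]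
    (X W : C → Prop) (hX : IsSubcat X) (hW : IsSubcat W)
    (hXext : ExtClosed X) (hcog : IsCogenerator W X)
    (hinj : ∀ M, W M → rightPerp X M)
    (M : C) (hM : HatAll X M) :
    (∃ (Y E : C) (f : Y ⟶ E) (φ : E ⟶ M), IsSES f φ ∧ X E ∧ HatAll W Y ∧
      ∀ (X' : C) (u : X' ⟶ M), X X' → ∃ v : X' ⟶ E, v ≫ φ = u) ∧
    (∃ (Y E : C) (ψ : M ⟶ Y) (g : Y ⟶ E), IsSES ψ g ∧ X E ∧ HatAll W Y ∧
      ∀ (Y' : C) (u : M ⟶ Y'), HatAll W Y' → ∃ v : Y ⟶ Y', ψ ≫ v = u) :=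
  statement2_general hXext hcog hinj hM

end FrobeniusPaper
end

section
/- Let (X, W) be a left Frobenius pair in A and let 0 → K → X → C → 0 be a short exact sequence in A with X ∈ X. Then C ∈ X̂ if and only if K ∈ X̂. -/
/-!
Splicing with `0 → K → E → M → 0` turns a resolution of `K` into one of `M`. Conversely, let
`M ∈ X̂` and choose an Auslander–Buchweitz approximation `0 → Y → X₀ → M → 0` with `X₀ ∈ X` and
`Y ∈ Ŵ`. The pullback `P` of `E → M ← X₀` sits in exact sequences `0 → Y → P → E → 0` and
`0 → K → P → X₀ → 0`. By dimension shifting `Ŵ ⊆ X^⊥`, so the first sequence splits. Read backwards,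
it makes `P` an extension of `Y ∈ X̂` by `E ∈ X`, and hence `P ∈ X̂`. The second sequence then gives
`K ∈ X̂`: in a resolution of `P`, replace the first term `G` by the kernel of `G → P → X₀`, which is
again in `X`.
-/

open CategoryTheory CategoryTheory.Limits CategoryTheory.Abelian ZeroObject

universe w v u

namespace FrobeniusPaper

variable {C : Type u} [Category.{v} C] [Abelian C]

variable [HasExt.{w} C]

section ShortExactSequences

variable {𝒜 : Type u} [Category.{v} 𝒜] [Abelian 𝒜] {A B D : 𝒜} {f : A ⟶ B} {g : B ⟶ D}

lemma isSES_iff_isPullback :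
    IsSES f g ↔ Epi g ∧ IsPullback f (0 : A ⟶ 0) g (0 : 0 ⟶ D) := by
  constructor
  · rintro ⟨w, h⟩
    have := h.mono_f
    refine ⟨h.epi_g, ⟨by simp [w]⟩, ⟨PullbackCone.IsLimit.mk _
      (fun s ↦ h.exact.lift s.fst (by simp [s.condition])) (fun s ↦ h.exact.lift_f _ _)
      (fun s ↦ (isZero_zero 𝒜).eq_of_tgt _ _) fun s m hm _ ↦ ?_⟩⟩
    rw [← cancel_mono f, hm, h.exact.lift_f]
  · rintro ⟨hg, sq⟩
    have w : f ≫ g = 0 := by rw [sq.w, zero_comp]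
    have hf : Mono f := MorphismProperty.of_isPullback (P := .monomorphisms 𝒜) sq.flip
      (inferInstanceAs (Mono (0 : (0 : 𝒜) ⟶ D)))
    have exact : (ShortComplex.mk f g w).Exact := ShortComplex.exact_of_f_is_kernel _
      (KernelFork.IsLimit.ofι' _ _ fun k hk ↦
        ⟨sq.lift k 0 (by rw [hk, zero_comp]), sq.lift_fst _ _ _⟩)
    exact ⟨w, { exact := exact, mono_f := hf, epi_g := hg }⟩

lemma isSES_iff_isPushout :
    IsSES f g ↔ Mono f ∧ IsPushout f (0 : A ⟶ 0) g (0 : 0 ⟶ D) := by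
  constructor
  · rintro ⟨w, h⟩
    have := h.epi_g
    refine ⟨h.mono_f, ⟨by simp [w]⟩, ⟨PushoutCocone.IsColimit.mk _
      (fun s ↦ h.exact.desc s.inl (by simp [s.condition])) (fun s ↦ h.exact.g_desc _ _)
      (fun s ↦ (isZero_zero 𝒜).eq_of_src _ _) fun s m hm _ ↦ ?_⟩⟩
    rw [← cancel_epi g, hm, h.exact.g_desc]
  · rintro ⟨hf, sq⟩
    have w : f ≫ g = 0 := by rw [sq.w, zero_comp]
    have hg : Epi g := MorphismProperty.of_isPushout (P := .epimorphisms 𝒜) sq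
      (inferInstanceAs (Epi (0 : A ⟶ (0 : 𝒜))))
    have exact : (ShortComplex.mk f g w).Exact := ShortComplex.exact_of_g_is_cokernel _
      (CokernelCofork.IsColimit.ofπ' _ _ fun k hk ↦
        ⟨sq.desc k 0 (by rw [hk, comp_zero]), sq.inl_desc _ _ _⟩)
    exact ⟨w, { exact := exact, mono_f := hf, epi_g := hg }⟩

namespace IsSES

lemma mono (h : IsSES f g) : Mono f := h.2.mono_f

lemma epi (h : IsSES f g) : Epi g := h.2.epi_g

lemma zero_id (A : 𝒜) : IsSES (0 : 0 ⟶ A) (𝟙 A) :=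
  isSES_iff_isPullback.2 ⟨inferInstance, IsPullback.zero_left A⟩

lemma exists_of_isPullback {D' P : 𝒜} {p : P ⟶ D'} {q : P ⟶ B} {d : D' ⟶ D}
    (h : IsSES f g) (sq : IsPullback p q d g) : ∃ i : A ⟶ P, IsSES i p := by
  obtain ⟨hg, hsq⟩ := isSES_iff_isPullback.1 h
  have hp : Epi p := MorphismProperty.of_isPullback (P := .epimorphisms 𝒜) sq.flip hg
  have hsq' : IsPullback f (0 : A ⟶ 0) g ((0 : 0 ⟶ D') ≫ d) := by rwa [zero_comp]
  exact ⟨_, isSES_iff_isPullback.2 ⟨hp, .of_right' hsq' sq.flip⟩⟩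

lemma exists_of_isPushout {A' P : 𝒜} {i : A' ⟶ P} {a : A ⟶ A'} {b : B ⟶ P}
    (h : IsSES f g) (sq : IsPushout f a b i) : ∃ p : P ⟶ D, IsSES i p := by
  obtain ⟨hf, hsq⟩ := isSES_iff_isPushout.1 h
  have hi : Mono i := MorphismProperty.of_isPushout (P := .monomorphisms 𝒜) sq.flip hf
  have hsq' : IsPushout f (a ≫ (0 : A' ⟶ 0)) g (0 : 0 ⟶ D) := by rwa [comp_zero]
  exact ⟨_, isSES_iff_isPushout.2 ⟨hi, .of_top' hsq' sq⟩⟩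

lemma comp_of_isPullback {G L : 𝒜} {l : L ⟶ G} {p : L ⟶ A} {q : G ⟶ B} [Epi q]
    (h : IsSES f g) (sq : IsPullback l p q f) : IsSES l (q ≫ g) := by
  obtain ⟨hg, hsq⟩ := isSES_iff_isPullback.1 h
  refine isSES_iff_isPullback.2 ⟨epi_comp q g, ?_⟩
  simpa using sq.paste_vert hsq

lemma comp_of_isPushout_s3 {G L : 𝒜} {j : B ⟶ G} {p : D ⟶ L} {l : G ⟶ L} [Mono j]
    (h : IsSES f g) (sq : IsPushout j g l p) : IsSES (f ≫ j) l := by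
  obtain ⟨hf, hsq⟩ := isSES_iff_isPushout.1 h
  refine isSES_iff_isPushout.2 ⟨mono_comp f j, ?_⟩
  simpa using hsq.paste_horiz sq

lemma exists_reverse_of_subsingleton_ext [HasExt.{w} 𝒜] (h : IsSES f g)
    (hExt : Subsingleton (Ext D A 1)) : ∃ (s : D ⟶ B) (r : B ⟶ A), IsSES s r := by
  obtain ⟨w, h⟩ := h
  obtain ⟨s, hs⟩ : ∃ s : D ⟶ B, s ≫ g = 𝟙 D := by
    obtain ⟨y, hy⟩ := Ext.covariant_sequence_exact₃ D h (Ext.mk₀ (𝟙 D)) (zero_add 1)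
      (Subsingleton.elim _ _)
    obtain ⟨s, rfl⟩ := (Ext.mk₀_bijective _ _).2 y
    exact ⟨s, (Ext.mk₀_bijective _ _).1 (by rwa [Ext.mk₀_comp_mk₀] at hy)⟩
  let σ := ShortComplex.Splitting.ofExactOfSection _ h.exact s hs h.mono_f
  let τ : (ShortComplex.mk σ.s σ.r σ.s_r).Splitting :=
    { r := g
      s := f
      f_r := σ.s_g
      s_g := σ.f_r
      id := by rw [add_comm]; exact σ.id }
  exact ⟨σ.s, σ.r, σ.s_r, τ.shortExact⟩

lemma rightPerp_right [HasExt.{w} 𝒜] {X : 𝒜 → Prop} (h : IsSES f g) (hA : rightPerp X A)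
    (hB : rightPerp X B) : rightPerp X D := by
  intro M hM i hi
  have := hB M hM i hi
  have := hA M hM (i + 1) (by lia)
  refine subsingleton_of_forall_eq 0 fun x ↦ ?_
  obtain ⟨y, rfl⟩ := Ext.covariant_sequence_exact₃ M h.2 x rfl (Subsingleton.elim _ _)
  rw [Subsingleton.elim y 0, Ext.zero_comp]

end IsSES

end ShortExactSequences

section Resolutions

variable {𝒜 : Type u} [Category.{v} 𝒜] [Abelian 𝒜] {X W : 𝒜 → Prop} {A B D : 𝒜}
  {f : A ⟶ B} {g : B ⟶ D}

lemma HatAll.of_mem (hA : X A) : HatAll X A := ⟨0, hA⟩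

lemma HatAll.of_cokernel (h : IsSES f g) (hB : X B) : HatAll X A → HatAll X D
  | ⟨n, hA⟩ => ⟨n + 1, A, B, f, g, h, hB, hA⟩

@[elab_as_elim]
lemma HatAll.induction {motive : ∀ M : 𝒜, HatAll X M → Prop}
    (mem : ∀ (M : 𝒜) (hM : X M), motive M (.of_mem hM))
    (cokernel : ∀ {K E M : 𝒜} (f : K ⟶ E) (g : E ⟶ M) (h : IsSES f g) (hE : X E)
      (hK : HatAll X K), motive K hK → motive M (.of_cokernel h hE hK))
    {M : 𝒜} (hM : HatAll X M) : motive M hM := by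
  obtain ⟨n, hM⟩ := hM
  induction n generalizing M with
  | zero => exact mem M hM
  | succ n ih =>
    obtain ⟨K, E, f, g, h, hE, hK⟩ := hM
    exact cokernel f g h hE ⟨n, hK⟩ (ih hK)

lemma HatAll.mono (hWX : ∀ M, W M → X M) {M : 𝒜} (hM : HatAll W M) : HatAll X M := by
  induction hM using HatAll.induction with
  | mem M hM => exact .of_mem (hWX M hM)
  | cokernel f g h hE _ ih => exact .of_cokernel h (hWX _ hE) ih

lemma HatAll.rightPerp [HasExt.{w} 𝒜] (hWX : ∀ M, W M → rightPerp X M) {M : 𝒜}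
    (hM : HatAll W M) : rightPerp X M := by
  induction hM using HatAll.induction with
  | mem M hM => exact hWX M hM
  | cokernel f g h hE _ ih => exact h.rightPerp_right ih (hWX _ hE)

lemma HatAll.of_extension (hX : ExtClosed X) (h : IsSES f g) (hA : X A) (hD : HatAll X D) :
    HatAll X B := by
  cases hD using HatAll.induction with
  | mem _ hD => exact .of_mem (hX f g h hA hD)
  | cokernel k q hq hG hK =>
    have sq := IsPullback.of_hasPullback q g
    obtain ⟨i, hi⟩ := h.exists_of_isPullback sq
    obtain ⟨j, hj⟩ := hq.exists_of_isPullback sq.flip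
    exact .of_cokernel hj (hX _ _ hi hA hG) hK

lemma HatAll.of_kernel (hX : KerEpiClosed X) (h : IsSES f g) (hB : HatAll X B) (hD : X D) :
    HatAll X A := by
  cases hB using HatAll.induction with
  | mem _ hB => exact .of_mem (hX f g h hB hD)
  | cokernel k q hq hG hK =>
    have := hq.epi
    have sq := IsPullback.of_hasPullback q f
    obtain ⟨i, hi⟩ := hq.exists_of_isPullback sq.flip
    exact .of_cokernel hi (hX _ _ (h.comp_of_isPullback sq) hG hD) hK

end Resolutions

section Approximations

variable {𝒜 : Type u} [Category.{v} 𝒜] [Abelian 𝒜] {X W : 𝒜 → Prop}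

lemma IsCogenerator.exists_coapproximation (hW : IsCogenerator W X) {Y X₀ K : 𝒜} {a : Y ⟶ X₀}
    {b : X₀ ⟶ K} (h : IsSES a b) (hX₀ : X X₀) (hY : HatAll W Y) :
    ∃ (H X' : 𝒜) (i : K ⟶ H) (p : H ⟶ X'), IsSES i p ∧ HatAll W H ∧ X X' := by
  obtain ⟨W₀, X', c, d, hcd, hW₀, hX'⟩ := hW.2 X₀ hX₀
  have := hcd.mono
  have sq := IsPushout.of_hasPushout c b
  obtain ⟨p, hp⟩ := hcd.exists_of_isPushout sq
  exact ⟨_, X', _, p, hp, .of_cokernel (h.comp_of_isPushout_s3 sq) hW₀ hY, hX'⟩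

lemma HatAll.exists_approximation (hX : ExtClosed X) (hW : IsCogenerator W X) (hW0 : W 0)
    {M : 𝒜} (hM : HatAll X M) :
    ∃ (Y X₀ : 𝒜) (a : Y ⟶ X₀) (b : X₀ ⟶ M), IsSES a b ∧ HatAll W Y ∧ X X₀ := by
  induction hM using HatAll.induction with
  | mem M hM => exact ⟨0, M, 0, 𝟙 M, .zero_id M, .of_mem hW0, hM⟩
  | cokernel f g h hE _ ih =>
    obtain ⟨Y, X₀, a, b, hab, hY, hX₀⟩ := ih
    obtain ⟨H, X', i, p, hip, hH, hX'⟩ := hW.exists_coapproximation hab hX₀ hY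
    have sq := IsPushout.of_hasPushout f i
    obtain ⟨b', hb'⟩ := h.exists_of_isPushout sq
    obtain ⟨p', hp'⟩ := hip.exists_of_isPushout sq.flip
    exact ⟨H, _, _, b', hb', hH, hX _ _ hp' hE hX'⟩

end Approximations

theorem statement3_general {𝒜 : Type u} [Category.{v} 𝒜] [Abelian 𝒜] [HasExt.{w} 𝒜]
    {X W : 𝒜 → Prop} (hExtClosed : ExtClosed X) (hKer : KerEpiClosed X) (hW : IsCogenerator W X)
    (hPerp : ∀ M, W M → rightPerp X M) (hW0 : W 0)
    {K E M : 𝒜} {f : K ⟶ E} {g : E ⟶ M} (h : IsSES f g) (hE : X E) :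
    HatAll X M ↔ HatAll X K := by
  refine ⟨fun hM ↦ ?_, .of_cokernel h hE⟩
  obtain ⟨Y, X₀, a, b, hab, hY, hX₀⟩ := hM.exists_approximation hExtClosed hW hW0
  have sq := IsPullback.of_hasPullback g b
  obtain ⟨i, hi⟩ := hab.exists_of_isPullback sq
  obtain ⟨j, hj⟩ := h.exists_of_isPullback sq.flip
  obtain ⟨s, r, hsr⟩ := hi.exists_reverse_of_subsingleton_ext (hY.rightPerp hPerp E hE 1 le_rfl)
  have hP : HatAll X (pullback g b) := .of_extension hExtClosed hsr hE (hY.mono hW.1)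
  exact .of_kernel hKer hj hP hX₀

/-- If `(X, W)` is a left Frobenius pair and `0 → K → E → M → 0` is a short
exact sequence with `E ∈ X`, then `M ∈ X̂` iff `K ∈ X̂`. -/
theorem statement3 {C : Type u} [Category.{v} C] [Abelian C]
    [EnoughProjectives C] [EnoughInjectives C] [HasExt.{w} C]
    (X W : C → Prop) (hF : LeftFrobenius X W)
    {K E M : C} (f : K ⟶ E) (g : E ⟶ M) (hses : IsSES f g) (hE : X E) :
    HatAll X M ↔ HatAll X K :=
  statement3_general hF.extClosed hF.kerEpiClosed hF.cogen hF.perp hF.subW.zero hses hE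

end FrobeniusPaper
end

section
/- The assignments (X, W) ↦ (X, Ŵ) and (U, V) ↦ (U, U ∩ V) are mutually inverse: if (U, V) is a cotorsion pair on Thick(U) with V ⊆ U^⊥, then the hull of U ∩ V satisfies (U ∩ V)^ = V; and if (X, W) is a left Frobenius pair, then X ∩ Ŵ = W. -/
/-!
Both hulls are controlled by closure under cokernels of monomorphisms, and objects are recognised by
splitting: a sequence `0 → A → B → D → 0` with `Ext¹(D, A) = 0` splits.

*Frobenius pairs.* `X^⊥` is closed under cokernels of monomorphisms, so it contains `Ŵ`. Hence, for
`M ∈ X ∩ Ŵ`, the cogenerator sequence `0 → M → W₀ → X' → 0` splits and `M` is a summand of `W₀`.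

*Cotorsion pairs.* Splitting the approximation sequences gives `V = Thick(U) ∩ U^⊥`, which is closed
under cokernels of monomorphisms and so contains `(U ∩ V)^`. For `V ⊆ (U ∩ V)^`, the length of a
resolution must be bounded. The objects `M` for which `Extⁱ(M, N) = 0` for all `N ∈ V` and all large
`i`, uniformly in `N`, form a thick subcategory containing `U`, hence containing `Thick(U)`. For
`M ∈ V`, in an approximation `0 → V₀ → U₀ → M → 0` the term `U₀` lies in `U ∩ V`, being an extension
of objects of `V`, and the bound for `V₀` is one less than the bound for `M`; once
`Ext¹(M, V) = 0`, `M` itself lies in `U`.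
-/

open CategoryTheory CategoryTheory.Limits CategoryTheory.Abelian ZeroObject

universe w v u

namespace FrobeniusPaper

variable {C : Type u} [Category.{v} C] [Abelian C]

variable [HasExt.{w} C]

section Hulls

omit [HasExt.{w} C]

/-- `P` is closed under cokernels of monomorphisms, dually to `KerEpiClosed`. Such a class contains
`Ŵ` as soon as it contains `W`. -/
def CokerMonoClosed (P : C → Prop) : Prop :=
  ∀ ⦃A B D : C⦄ (f : A ⟶ B) (g : B ⟶ D), IsSES f g → P A → P B → P D

lemma CokerMonoClosed.of_hat {P W : C → Prop} (hP : CokerMonoClosed P) (hW : ∀ M, W M → P M) :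
    ∀ {n : ℕ} {M : C}, Hat W n M → P M
  | 0, M, hM => hW M hM
  | _ + 1, _, ⟨_, E, f, g, hs, hE, hK⟩ => hP f g hs (hP.of_hat hW hK) (hW E hE)

lemma CokerMonoClosed.of_hatAll {P W : C → Prop} (hP : CokerMonoClosed P)
    (hW : ∀ M, W M → P M) {M : C} : HatAll W M → P M :=
  fun ⟨_, hM⟩ => hP.of_hat hW hM

lemma cokerMonoClosed_thickClosure (U : C → Prop) : CokerMonoClosed (thickClosure U) :=
  fun _ _ _ f g hs hA hB T hT hU => (hT.2 f g hs).1 (hA T hT hU) (hB T hT hU)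

lemma isSES_biprod (A B : C) : IsSES (biprod.inl : A ⟶ A ⊞ B) (biprod.snd : A ⊞ B ⟶ B) :=
  ⟨biprod.inl_snd, (ShortComplex.Splitting.ofHasBinaryBiproduct A B).shortExact⟩

lemma isThickSub_of_retract_of_twoOutOfThree {T : C → Prop} (hzero : T 0)
    (hretract : ∀ {A M : C} (i : A ⟶ M) (p : M ⟶ A), i ≫ p = 𝟙 A → T M → T A)
    (hcoker : CokerMonoClosed T) (hext : ExtClosed T) (hker : KerEpiClosed T) : IsThickSub T where
  left :=
    { zero := hzero
      iso_closed := fun e => hretract e.inv e.hom e.inv_hom_id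
      biprod_closed := fun {A B} => hext _ _ (isSES_biprod A B)
      summand_closed := hretract }
  right := fun _ _ _ f g hs => ⟨hcoker f g hs, hext f g hs, hker f g hs⟩

end Hulls

lemma IsSES.exists_splitting {A B D : C} {f : A ⟶ B} {g : B ⟶ D} (h : IsSES f g)
    (hDA : Subsingleton (Ext D A 1)) :
    ∃ (r : B ⟶ A) (s : D ⟶ B), f ≫ r = 𝟙 A ∧ s ≫ g = 𝟙 D := by
  obtain ⟨w, hS⟩ := h
  obtain ⟨y, hy⟩ := Ext.covariant_sequence_exact₃ D hS (Ext.mk₀ (𝟙 D)) (zero_add 1)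
    (hDA.elim _ _)
  obtain ⟨s, rfl⟩ := (Ext.mk₀_bijective _ _).2 y
  have hs : s ≫ g = 𝟙 D := (Ext.mk₀_bijective _ _).1 (by rw [← hy, Ext.mk₀_comp_mk₀])
  let σ := ShortComplex.Splitting.ofExactOfSection _ hS.exact s hs hS.mono_f
  exact ⟨σ.r, s, σ.f_r, hs⟩

section RightPerp

lemma extClosed_rightPerp (X : C → Prop) : ExtClosed (rightPerp X) := by
  rintro A B D f g ⟨_, hS⟩ hA hD M hM i hi
  refine subsingleton_of_forall_eq 0 fun x => ?_
  obtain ⟨y, rfl⟩ := Ext.covariant_sequence_exact₂ M hS x ((hD M hM i hi).elim _ _)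
  rw [(hA M hM i hi).elim y 0, Ext.zero_comp]

lemma cokerMonoClosed_rightPerp (X : C → Prop) : CokerMonoClosed (rightPerp X) := by
  rintro A B D f g ⟨_, hS⟩ hA hB M hM i hi
  refine subsingleton_of_forall_eq 0 fun x => ?_
  obtain ⟨y, rfl⟩ := Ext.covariant_sequence_exact₃ M hS x rfl
    ((hA M hM (i + 1) (by lia)).elim _ _)
  rw [(hB M hM i hi).elim y 0, Ext.zero_comp]

lemma IsCogenerator.mem_of_subsingleton_ext_one {X W : C → Prop} (h : IsCogenerator W X)
    (hW : IsSubcat W) {M : C} (hX : X M) (hM : ∀ N, X N → Subsingleton (Ext N M 1)) : W M := by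
  obtain ⟨W₀, X', f, g, hs, hW₀, hX'⟩ := h.2 M hX
  obtain ⟨r, _, hr, _⟩ := hs.exists_splitting (hM X' hX')
  exact hW.summand_closed f r hr hW₀

lemma IsCogenerator.inter_hatAll_iff {X W : C → Prop} (h : IsCogenerator W X) (hW : IsSubcat W)
    (hperp : ∀ M, W M → rightPerp X M) {M : C} : (X M ∧ HatAll W M) ↔ W M := by
  refine ⟨fun ⟨hX, hM⟩ => ?_, fun hM => ⟨h.1 M hM, 0, hM⟩⟩
  have hXM : rightPerp X M := (cokerMonoClosed_rightPerp X).of_hatAll hperp hM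
  exact h.mem_of_subsingleton_ext_one hW hX fun N hN => hXM N hN 1 le_rfl

end RightPerp

section RelativeProjectiveDimension

/-- `M` has projective dimension `< n` relative to `V`; this bounds the length of
`U ∩ V`-resolutions. As for `HasProjectiveDimensionLT`, the inequality is strict, so that `n = 1`
is the condition `Extⁱ(M, V) = 0` for all `i ≥ 1`. -/
def HasRelProjDimLT (V : C → Prop) (n : ℕ) (M : C) : Prop :=
  ∀ N, V N → ∀ i : ℕ, n ≤ i → Subsingleton (Ext M N i)

variable {V : C → Prop} {n m : ℕ}

lemma HasRelProjDimLT.mono {M : C} (hM : HasRelProjDimLT V n M) (hnm : n ≤ m) :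
    HasRelProjDimLT V m M :=
  fun N hN i hi => hM N hN i (hnm.trans hi)

lemma HasRelProjDimLT.of_retract {A M : C} (hM : HasRelProjDimLT V n M) (r : A ⟶ M) (p : M ⟶ A)
    (hrp : r ≫ p = 𝟙 A) : HasRelProjDimLT V n A := by
  refine fun N hN i hi => subsingleton_of_forall_eq 0 fun x => ?_
  rw [← Ext.mk₀_id_comp x, ← hrp, ← Ext.mk₀_comp_mk₀_assoc,
    (hM N hN i hi).elim ((Ext.mk₀ p).comp x (zero_add i)) 0, Ext.comp_zero]

lemma hasRelProjDimLT_zero_object (V : C → Prop) : HasRelProjDimLT V 0 (0 : C) :=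
  fun N _ i hi => HasProjectiveDimensionLT.subsingleton 0 0 i hi N

section ShortExact

variable {A B D : C} {f : A ⟶ B} {g : B ⟶ D}

lemma IsSES.hasRelProjDimLT_left (h : IsSES f g) (hB : HasRelProjDimLT V n B)
    (hD : HasRelProjDimLT V (n + 1) D) : HasRelProjDimLT V n A := by
  obtain ⟨_, hS⟩ := h
  refine fun N hN i hi => subsingleton_of_forall_eq 0 fun x => ?_
  obtain ⟨y, rfl⟩ := Ext.contravariant_sequence_exact₁ hS N x (add_comm 1 i)
    ((hD N hN (i + 1) (by lia)).elim _ _)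
  rw [(hB N hN i hi).elim y 0, Ext.comp_zero]

lemma IsSES.hasRelProjDimLT_mid (h : IsSES f g) (hA : HasRelProjDimLT V n A)
    (hD : HasRelProjDimLT V n D) : HasRelProjDimLT V n B := by
  obtain ⟨_, hS⟩ := h
  refine fun N hN i hi => subsingleton_of_forall_eq 0 fun x => ?_
  obtain ⟨y, rfl⟩ := Ext.contravariant_sequence_exact₂ hS N x ((hA N hN i hi).elim _ _)
  rw [(hD N hN i hi).elim y 0, Ext.comp_zero]

lemma IsSES.hasRelProjDimLT_right (h : IsSES f g) (hA : HasRelProjDimLT V n A)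
    (hB : HasRelProjDimLT V (n + 1) B) : HasRelProjDimLT V (n + 1) D := by
  obtain ⟨_, hS⟩ := h
  rintro N hN (_ | i) hi
  · simp at hi
  refine subsingleton_of_forall_eq 0 fun x => ?_
  obtain ⟨y, rfl⟩ := Ext.contravariant_sequence_exact₃ hS N x ((hB N hN (i + 1) hi).elim _ _)
    (add_comm 1 i)
  rw [(hA N hN i (by lia)).elim y 0, Ext.comp_zero]

end ShortExact

lemma isThickSub_exists_hasRelProjDimLT (V : C → Prop) :
    IsThickSub fun M : C => ∃ n, HasRelProjDimLT V n M := by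
  apply isThickSub_of_retract_of_twoOutOfThree
  case hzero => exact ⟨0, hasRelProjDimLT_zero_object V⟩
  case hretract =>
    rintro A M r p hrp ⟨n, hM⟩
    exact ⟨n, hM.of_retract r p hrp⟩
  case hcoker =>
    rintro A B D f g hs ⟨n, hA⟩ ⟨m, hB⟩
    exact ⟨max n m + 1, hs.hasRelProjDimLT_right (hA.mono (by lia)) (hB.mono (by lia))⟩
  case hext =>
    rintro A B D f g hs ⟨n, hA⟩ ⟨m, hD⟩
    exact ⟨max n m, hs.hasRelProjDimLT_mid (hA.mono (by lia)) (hD.mono (by lia))⟩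
  case hker =>
    rintro A B D f g hs ⟨n, hB⟩ ⟨m, hD⟩
    exact ⟨max n m, hs.hasRelProjDimLT_left (hB.mono (by lia)) (hD.mono (by lia))⟩

lemma exists_hasRelProjDimLT_of_thickClosure {U : C → Prop} (hUV : ∀ N, V N → rightPerp U N)
    {M : C} (hM : thickClosure U M) : ∃ n, HasRelProjDimLT V n M :=
  hM _ (isThickSub_exists_hasRelProjDimLT V) fun A hA => ⟨1, fun N hN => hUV N hN A hA⟩

end RelativeProjectiveDimension

namespace CotorsionPairOn

variable {B U V : C → Prop} {M : C}

lemma mem_right_of_subsingleton_ext_one (h : CotorsionPairOn B U V) (hM : B M)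
    (hU : ∀ N, U N → Subsingleton (Ext N M 1)) : V M := by
  obtain ⟨V₀, U₀, f, g, hs, hU₀, hV₀⟩ := h.cores M hM
  obtain ⟨r, _, hr, _⟩ := hs.exists_splitting (hU U₀ hU₀)
  exact h.summandV f r hr hV₀

lemma mem_left_of_subsingleton_ext_one (h : CotorsionPairOn B U V) (hM : B M)
    (hV : ∀ N, V N → Subsingleton (Ext M N 1)) : U M := by
  obtain ⟨V₀, U₀, f, g, hs, hU₀, hV₀⟩ := h.res M hM
  obtain ⟨_, s, _, hsg⟩ := hs.exists_splitting (hV V₀ hV₀)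
  exact h.summandU s g hsg hU₀

lemma mem_right_iff (h : CotorsionPairOn B U V) (hUV : ∀ N, V N → rightPerp U N) :
    V M ↔ B M ∧ rightPerp U M :=
  ⟨fun hM => ⟨h.subV M hM, hUV M hM⟩,
    fun ⟨hM, hU⟩ => h.mem_right_of_subsingleton_ext_one hM fun N hN => hU N hN 1 le_rfl⟩

lemma cokerMonoClosed_right (h : CotorsionPairOn B U V) (hUV : ∀ N, V N → rightPerp U N)
    (hB : CokerMonoClosed B) : CokerMonoClosed V := by
  simp only [CokerMonoClosed, h.mem_right_iff hUV]
  exact fun _ _ _ f g hs hA hE =>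
    ⟨hB f g hs hA.1 hE.1, cokerMonoClosed_rightPerp U f g hs hA.2 hE.2⟩

lemma hat_of_hasRelProjDimLT (h : CotorsionPairOn B U V) (hUV : ∀ N, V N → rightPerp U N) :
    ∀ {n : ℕ} {M : C}, V M → HasRelProjDimLT V (n + 1) M → Hat (fun A => U A ∧ V A) n M
  | 0, M, hM, hd =>
    ⟨h.mem_left_of_subsingleton_ext_one (h.subV M hM) fun N hN => hd N hN 1 le_rfl, hM⟩
  | n + 1, M, hM, hd => by
    obtain ⟨V₀, U₀, f, g, hs, hU₀, hV₀⟩ := h.res M (h.subV M hM)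
    have hVU₀ : V U₀ := (h.mem_right_iff hUV).2
      ⟨h.subU U₀ hU₀, extClosed_rightPerp U f g hs (hUV V₀ hV₀) (hUV M hM)⟩
    have hdU₀ : HasRelProjDimLT V 1 U₀ := fun N hN => hUV N hN U₀ hU₀
    have hdV₀ : HasRelProjDimLT V (n + 1) V₀ := hs.hasRelProjDimLT_left (hdU₀.mono (by lia)) hd
    exact ⟨V₀, U₀, f, g, hs, ⟨hU₀, hVU₀⟩, h.hat_of_hasRelProjDimLT hUV hV₀ hdV₀⟩

lemma hatAll_inter_iff (h : CotorsionPairOn (thickClosure U) U V)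
    (hUV : ∀ N, V N → rightPerp U N) : HatAll (fun A => U A ∧ V A) M ↔ V M := by
  constructor
  · exact (h.cokerMonoClosed_right hUV (cokerMonoClosed_thickClosure U)).of_hatAll fun _ hA => hA.2
  · intro hM
    obtain ⟨n, hd⟩ := exists_hasRelProjDimLT_of_thickClosure hUV (h.subV M hM)
    exact ⟨n, h.hat_of_hasRelProjDimLT hUV hM (hd.mono n.le_succ)⟩

end CotorsionPairOn

theorem statement9_general :
    (∀ U V : C → Prop, CotorsionPairOn (thickClosure U) U V →
      (∀ N, V N → rightPerp U N) →
      ∀ M, HatAll (fun A => U A ∧ V A) M ↔ V M) ∧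
    (∀ X W : C → Prop, IsSubcat W → IsCogenerator W X → (∀ M, W M → rightPerp X M) →
      ∀ M, (X M ∧ HatAll W M) ↔ W M) :=
  ⟨fun _ _ h hUV _ => h.hatAll_inter_iff hUV, fun _ _ hW h hperp _ => h.inter_hatAll_iff hW hperp⟩

/-- The assignments `(X, W) ↦ (X, Ŵ)` and `(U, V) ↦ (U, U ∩ V)` are mutually
inverse: `(U ∩ V)^ = V` for a cotorsion pair `(U, V)` on `Thick(U)` with `V ⊆ U^⊥`, and
`X ∩ Ŵ = W` for a left Frobenius pair `(X, W)`. -/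
theorem statement9 {C : Type u} [Category.{v} C] [Abelian C]
    [EnoughProjectives C] [EnoughInjectives C] [HasExt.{w} C] :
    (∀ U V : C → Prop, CotorsionPairOn (thickClosure U) U V →
      (∀ N, V N → rightPerp U N) →
      ∀ M, HatAll (fun A => U A ∧ V A) M ↔ V M) ∧
    (∀ X W : C → Prop, LeftFrobenius X W →
      ∀ M, (X M ∧ HatAll W M) ↔ W M) :=
  ⟨statement9_general.1,
    fun X W h => statement9_general.2 X W h.subW h.cogen h.perp⟩

end FrobeniusPaper
end
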